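/- Let 𝒯 be a T-mesh of Ω with d ≥ 2, let i ∈ {1,…,d}, and let x, y ∈ cl(Ω) be points with x_i = y_i, x ∈ Sk_i and y ∉ Sk_i. Then there exists a T-junction T with odir(T) = i, with pointing direction k = pdir(T) and associated cell Q = ascell(T), such that cl(T) ∩ conv{x, y} ≠ ∅, x_k ≠ y_k, and Q_k ∩ conv{x_k, y_k} ≠ ∅. In particular T_i = {x_i} = {y_i}. -/

import Mathlib

/-!
Idea of the proof. Let `z` be the last point of the segment from `x` to `y` on the skeleton
`Sk_i`, let `F` be an `i`-orthogonal hyperface with `z ∈ cl F`, and let `w` be a point of the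
segment shortly after `z`, so that `w ∉ Sk_i`. Choose `f ∈ F` close to `z`, with non-integer
coordinates in all directions other than `i`. Starting from `w`, replace coordinates by those of
`f`: first those in which the segment is constant, then the others one at a time. The entities
met at the corners of this path have interval components off `i`, hence each is a cell or an
`i`-orthogonal hyperface. The first one is a cell (otherwise `w` would lie in `Sk_i`) and the
last one is `F`. So for some `k` with `x k ≠ y k`, switching the `k`-th coordinate leads from a
cell `Q` to an `i`-orthogonal hyperface `P`. The entity `J` through the corresponding point of the
common `k`-orthogonal boundary of `Q` and `P` is the T-junction sought
(`exists_tjunction_of_cross`): its `i`-th component is a singleton because `J ⊆ cl P`, it lies on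
`∂Q` because `J ⊆ cl Q`, and around `J` there is room for `P` and at most two `k`-orthogonal
hyperfaces, since the fourth position is occupied by `Q`.

The inclusions `J ⊆ cl P` and `J ⊆ cl Q` are instances of the frontier condition
(`TMesh.frontier_condition`): an entity that meets the closure of another one is contained in it.
It holds for tensor-product meshes and is preserved by bisections, because the interval components
in a fixed direction are dyadic: two of them are disjoint, equal, or one lies in a half of the
other (`Dyadic.rel`). Hence an entity in the closure of the bisected cell that is not split
itself lies on one side of the splitting hyperplane or inside it.
-/

open Set

namespace TSpline

/-- A box in `ℝ^d`, given componentwise. -/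
abbrev Box (d : ℕ) := Fin d → Set ℝ

/-- The subset of `ℝ^d` determined by a box. -/
def toSet {d : ℕ} (E : Box d) : Set (Fin d → ℝ) := Set.pi Set.univ E

/-- The closed index domain `cl Ω = ∏ₖ [0, Nₖ]`. -/
def domain {d : ℕ} (N : Fin d → ℕ) : Set (Fin d → ℝ) :=
  Set.pi Set.univ (fun k => Set.Icc (0 : ℝ) (N k))

/-- The boundary `∂Ω` of the index domain. -/
def bdryDomain {d : ℕ} (N : Fin d → ℕ) : Set (Fin d → ℝ) := frontier (domain N)

/-- A component which is an integer singleton `{n}`, `0 ≤ n ≤ Nₖ`. -/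
def IsSingletonComp (Nk : ℕ) (S : Set ℝ) : Prop :=
  ∃ n : ℕ, n ≤ Nk ∧ S = {(n : ℝ)}

/-- A component which is an open interval with integer endpoints in `[0, Nₖ]`. -/
def IsIntervalComp (Nk : ℕ) (S : Set ℝ) : Prop :=
  ∃ a b : ℕ, a < b ∧ b ≤ Nk ∧ S = Set.Ioo (a : ℝ) (b : ℝ)

/-- A mesh entity: every component is an integer singleton or an open integer interval. -/
def IsMeshEntity {d : ℕ} (N : Fin d → ℕ) (E : Box d) : Prop :=
  ∀ k, IsSingletonComp (N k) (E k) ∨ IsIntervalComp (N k) (E k)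

/-- The directions in which an entity has a singleton component. -/
def singDirs {d : ℕ} (E : Box d) : Set (Fin d) := {i | ∃ r : ℝ, E i = {r}}

/-- Split all entities of `M` contained in the region `D` whose `j`-th component is `Q j`
into the three children obtained by bisecting the `j`-th component at `m`. -/
def midSplit {d : ℕ} (M : Set (Box d)) (Q : Box d) (j : Fin d) (m : ℝ) (D : Box d) :
    Set (Box d) :=
  (M \ {E | E ∈ M ∧ (∀ k, E k ⊆ D k) ∧ E j = Q j}) ∪
  ⋃ E ∈ {E | E ∈ M ∧ (∀ k, E k ⊆ D k) ∧ E j = Q j},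
    ({Function.update E j (Set.Ioo (sInf (Q j)) m),
      Function.update E j {m},
      Function.update E j (Set.Ioo m (sSup (Q j)))} : Set (Box d))

/-- One symmetric bisection of a `d`-dimensional cell with integer midpoint. -/
def BisectStep {d : ℕ} (N : Fin d → ℕ) (M M' : Set (Box d)) : Prop :=
  ∃ Q ∈ M, ∃ j : Fin d, ∃ a b mid : ℕ,
    (∀ k, IsIntervalComp (N k) (Q k)) ∧
    Q j = Set.Ioo (a : ℝ) (b : ℝ) ∧ a + b = 2 * mid ∧
    M' = midSplit M Q j (mid : ℝ) (fun k => closure (Q k))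

/-- A tensor-product mesh with integer breakpoints. -/
def IsTensorMesh {d : ℕ} (N : Fin d → ℕ) (M : Set (Box d)) : Prop :=
  ∃ G : Fin d → Finset ℕ,
    (∀ k, 0 ∈ G k ∧ N k ∈ G k ∧ ∀ n ∈ G k, n ≤ N k) ∧
    M = {E | ∀ k, (∃ n ∈ G k, E k = {(n : ℝ)}) ∨
          (∃ a ∈ G k, ∃ b ∈ G k, a < b ∧ (∀ c ∈ G k, c ≤ a ∨ b ≤ c) ∧
            E k = Set.Ioo (a : ℝ) (b : ℝ))}

/-- A T-mesh of the index domain: a finite disjoint partition of `cl Ω` into mesh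
entities, obtained from a tensor-product mesh by repeated symmetric bisections. -/
structure TMesh (d : ℕ) (N : Fin d → ℕ) where
  entities : Set (Box d)
  finite : entities.Finite
  mem_entity : ∀ E ∈ entities, IsMeshEntity N E
  union_eq : (⋃ E ∈ entities, toSet E) = domain N
  pairwise_disjoint : ∀ E ∈ entities, ∀ F ∈ entities, E ≠ F → toSet E ∩ toSet F = ∅
  constructed : ∃ M₀ : Set (Box d), IsTensorMesh N M₀ ∧
    Relation.ReflTransGen (BisectStep N) M₀ entities

variable {d : ℕ} {N : Fin d → ℕ}

/-- `H^k`: the entities with exactly `d - k` singleton components. -/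
def Hdim (T : TMesh d N) (k : ℕ) : Set (Box d) :=
  {E ∈ T.entities | (singDirs E).ncard = d - k}

/-- The `j`-orthogonal skeleton `Sk_j`. -/
def skel (T : TMesh d N) (j : Fin d) : Set (Fin d → ℝ) :=
  ⋃ F ∈ {F ∈ Hdim T (d - 1) | ∃ r : ℝ, F j = {r}}, closure (toSet F)

/-- The valence of a `(d-2)`-dimensional entity: the number of hyperfaces in whose
boundary it lies. -/
noncomputable def valence (T : TMesh d N) (J : Box d) : ℕ :=
  {F ∈ Hdim T (d - 1) | toSet J ⊆ frontier (toSet F)}.ncard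

/-- A T-junction (hanging interface). -/
def IsTJunction (T : TMesh d N) (J : Box d) : Prop :=
  J ∈ Hdim T (d - 2) ∧ ¬ toSet J ⊆ bdryDomain N ∧ valence T J < 4

/-- `TJData T J Q i j`: `Q` is an associated cell of the T-junction `J`, with orthogonal
direction `i` and pointing direction `j`. -/
def TJData (T : TMesh d N) (J Q : Box d) (i j : Fin d) : Prop :=
  Q ∈ Hdim T d ∧ toSet J ⊆ frontier (toSet Q) ∧
  closure (toSet J) ∩ Set.pi Set.univ (fun k => frontier (Q k)) = ∅ ∧
  i ≠ j ∧ (∃ r : ℝ, J i = {r}) ∧ (∃ r : ℝ, J j = {r}) ∧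
  J i ⊆ Q i ∧ J i ≠ Q i ∧ J j ⊆ frontier (Q j)

/-- `⌊(p_k + 1)/2⌋`. -/
def halfdeg (p : Fin d → ℕ) (k : Fin d) : ℕ := (p k + 1) / 2

/-- The active region `AR_p`. -/
def activeRegion (N p : Fin d → ℕ) : Set (Fin d → ℝ) :=
  Set.pi Set.univ (fun k => Set.Icc (halfdeg p k : ℝ) ((N k : ℝ) - (halfdeg p k : ℝ)))

/-- The slice `S_k(n)`. -/
def slice (N : Fin d → ℕ) (k : Fin d) (n : ℕ) : Set (Fin d → ℝ) :=
  {x ∈ domain N | x k = (n : ℝ)}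

/-- The `k`-th frame region `FR^(k)`. -/
def frameRegion (N p : Fin d → ℕ) (k : Fin d) : Set (Fin d → ℝ) :=
  {x ∈ domain N | x k ∈ Set.Icc (0 : ℝ) (halfdeg p k : ℝ) ∪
      Set.Icc ((N k : ℝ) - (halfdeg p k : ℝ)) (N k : ℝ)}

/-- Admissibility of a T-mesh. -/
def Admissible (p : Fin d → ℕ) (T : TMesh d N) : Prop :=
  (∀ k : Fin d, ∀ J Q : Box d, ∀ i j : Fin d, IsTJunction T J → TJData T J Q i j →
      (i = k ∨ j = k) → ¬ toSet J ⊆ frameRegion N p k) ∧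
  (∀ k : Fin d, ∀ n : ℕ, (n ≤ halfdeg p k ∨ (N k - halfdeg p k ≤ n ∧ n ≤ N k)) →
      slice N k n ⊆ skel T k)

/-- Anchors of degree `p`. -/
def IsAnchor (p : Fin d → ℕ) (T : TMesh d N) (A : Box d) : Prop :=
  A ∈ T.entities ∧ toSet A ⊆ activeRegion N p ∧
  ∀ j : Fin d, (∃ r : ℝ, A j = {r}) ↔ Odd (p j)

/-- `P_{j,n}(E)`: replace the `j`-th component of `E` by `{n}`. -/
def proj {d : ℕ} (E : Box d) (j : Fin d) (n : ℕ) : Box d :=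
  Function.update E j {(n : ℝ)}

/-- The global knot vector `gv_j(E)` (as a set of integer indices). -/
def gv (T : TMesh d N) (j : Fin d) (E : Box d) : Set ℕ :=
  {n | n ≤ N j ∧ toSet (proj E j n) ⊆ skel T j}

/-- `V` is a block of consecutive entries of `G`. -/
def IsBlockOf (V G : Set ℕ) : Prop :=
  V ⊆ G ∧ V.Finite ∧ ∀ g ∈ G, ∀ a ∈ V, ∀ b ∈ V, a ≤ g → g ≤ b → g ∈ V

/-- Two knot vectors overlap (`⋈`): both occur as blocks of consecutive entries of a
common knot vector. -/
def Overlaps (V₁ V₂ : Set ℕ) : Prop :=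
  ∃ W : Set ℕ, W.Finite ∧ IsBlockOf V₁ W ∧ IsBlockOf V₂ W

/-- The convex hull in `ℝ` of a set of integer indices. -/
def convOf (V : Set ℕ) : Set ℝ := convexHull ℝ ((fun n : ℕ => (n : ℝ)) '' V)

/-- The local knot vector of an anchor `A` in direction `j`: the block of `p_j + 2`
consecutive entries of `gv_j(A)` whose entry of rank `⌊(p_j+1)/2⌋` is `inf A_j`. -/
def IsAnchorKV (T : TMesh d N) (p : Fin d → ℕ) (A : Box d) (j : Fin d) (V : Set ℕ) : Prop :=
  IsBlockOf V (gv T j A) ∧ V.ncard = p j + 2 ∧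
  ∃ a : ℕ, (a : ℝ) = sInf (A j) ∧ a ∈ V ∧ {v ∈ V | v < a}.ncard = halfdeg p j

open Classical in
noncomputable def anchorKV (T : TMesh d N) (p : Fin d → ℕ) (A : Box d) (j : Fin d) :
    Set ℕ :=
  if h : ∃ V, IsAnchorKV T p A j V then h.choose else ∅

/-- The index support of an anchor. -/
noncomputable def suppA (T : TMesh d N) (p : Fin d → ℕ) (A : Box d) : Set (Fin d → ℝ) :=
  Set.pi Set.univ (fun k => convOf (anchorKV T p A k))

/-- The local knot vector of a T-junction `J` (with associated cell `Q`, orthogonal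
direction `i`, pointing direction `j`) in direction `k`. -/
def IsTJKV (T : TMesh d N) (p : Fin d → ℕ) (J Q : Box d) (i j k : Fin d) (V : Set ℕ) :
    Prop :=
  if k = i then ∃ t : ℕ, J i = {(t : ℝ)} ∧ V = {t}
  else if k = j then
    IsBlockOf V (gv T j J) ∧ V.ncard = p j + 1 ∧
    ((Even (p j) ∧ ∃ t : ℕ, J j = {(t : ℝ)} ∧ t ∈ V ∧ {v ∈ V | v < t}.ncard = p j / 2) ∨
     (Odd (p j) ∧ ∃ a b : ℕ, (a : ℝ) = sInf (Q j) ∧ (b : ℝ) = sSup (Q j) ∧ a ∈ V ∧ b ∈ V ∧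
        {v ∈ V | v < a}.ncard = p j / 2 ∧ {v ∈ V | v < b}.ncard = p j / 2 + 1))
  else
    IsBlockOf V (gv T k J) ∧ V.ncard = p k + 2 + p k % 2 ∧
    ∃ a b : ℕ, a ∈ V ∧ b ∈ V ∧ J k = Set.Ioo (a : ℝ) (b : ℝ) ∧
      {v ∈ V | v < a}.ncard = (p k + 1) / 2 ∧ {v ∈ V | v < b}.ncard = (p k + 1) / 2 + 1

/-- Local knot vector of a T-junction, quantifying over the (unique) associated data. -/
def IsTJKVFull (T : TMesh d N) (p : Fin d → ℕ) (J : Box d) (k : Fin d) (V : Set ℕ) :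
    Prop :=
  ∃ Q : Box d, ∃ i j : Fin d, TJData T J Q i j ∧ IsTJKV T p J Q i j k V

open Classical in
noncomputable def tjKV (T : TMesh d N) (p : Fin d → ℕ) (J : Box d) (k : Fin d) : Set ℕ :=
  if h : ∃ V, IsTJKVFull T p J k V then h.choose else ∅

/-- The geometric T-junction extension `GTJ(J)`. -/
noncomputable def GTJ (T : TMesh d N) (p : Fin d → ℕ) (J : Box d) : Set (Fin d → ℝ) :=
  Set.pi Set.univ (fun k => convOf (tjKV T p J k))

/-- `J` is a T-junction with orthogonal direction `i` and pointing direction `j`. -/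
def HasDirs (T : TMesh d N) (J : Box d) (i j : Fin d) : Prop :=
  IsTJunction T J ∧ ∃ Q : Box d, TJData T J Q i j

/-- Strong geometric analysis-suitability. -/
def SGAS (T : TMesh d N) (p : Fin d → ℕ) : Prop :=
  ∀ J₁ J₂ : Box d, ∀ i₁ j₁ i₂ j₂ : Fin d,
    HasDirs T J₁ i₁ j₁ → HasDirs T J₂ i₂ j₂ → i₁ ≠ i₂ →
    GTJ T p J₁ ∩ GTJ T p J₂ = ∅

/-- Weak geometric analysis-suitability. -/
def WGAS (T : TMesh d N) (p : Fin d → ℕ) : Prop :=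
  ∀ J₁ J₂ : Box d, ∀ i₁ j₁ i₂ j₂ : Fin d,
    HasDirs T J₁ i₁ j₁ → HasDirs T J₂ i₂ j₂ → i₁ ≠ i₂ → j₁ ≠ j₂ →
    GTJ T p J₁ ∩ GTJ T p J₂ = ∅

/-- The abstract T-junction extension `ATJ_j(n)`. -/
noncomputable def ATJ (T : TMesh d N) (p : Fin d → ℕ) (j : Fin d) (n : ℕ) :
    Set (Fin d → ℝ) :=
  slice N j n ∩
  (⋃ A ∈ {A : Box d | IsAnchor p T A ∧ n ∈ gv T j A}, suppA T p A) ∩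
  (⋃ A ∈ {A : Box d | IsAnchor p T A ∧ n ∉ gv T j A}, suppA T p A)

/-- `ATJ_j = ⋃ₙ ATJ_j(n)`. -/
noncomputable def ATJfull (T : TMesh d N) (p : Fin d → ℕ) (j : Fin d) :
    Set (Fin d → ℝ) :=
  ⋃ n ∈ Set.Iic (N j), ATJ T p j n

/-- Abstract analysis-suitability. -/
def AAS (T : TMesh d N) (p : Fin d → ℕ) : Prop :=
  ∀ i j : Fin d, i ≠ j → ∀ n m : ℕ, n ≤ N i → m ≤ N j →
    ATJ T p i n ∩ ATJ T p j m = ∅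

/-- Two anchors weakly partially overlap. -/
def WeakPartOverlap (T : TMesh d N) (p : Fin d → ℕ) (A₁ A₂ : Box d) : Prop :=
  ∃ ℓ : Fin d, anchorKV T p A₁ ℓ ≠ anchorKV T p A₂ ℓ ∧
    Overlaps (anchorKV T p A₁ ℓ) (anchorKV T p A₂ ℓ)

/-- Two anchors strongly partially overlap. -/
def StrongPartOverlap (T : TMesh d N) (p : Fin d → ℕ) (A₁ A₂ : Box d) : Prop :=
  suppA T p A₁ ∩ suppA T p A₂ = ∅ ∨
  d - 1 ≤ {k : Fin d | Overlaps (anchorKV T p A₁ k) (anchorKV T p A₂ k)}.ncard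

/-- Weak dual-compatibility. -/
def WDC (T : TMesh d N) (p : Fin d → ℕ) : Prop :=
  ∀ A₁ A₂ : Box d, IsAnchor p T A₁ → IsAnchor p T A₂ → A₁ ≠ A₂ →
    WeakPartOverlap T p A₁ A₂

/-- Strong dual-compatibility. -/
def SDC (T : TMesh d N) (p : Fin d → ℕ) : Prop :=
  ∀ A₁ A₂ : Box d, IsAnchor p T A₁ → IsAnchor p T A₂ → A₁ ≠ A₂ →
    StrongPartOverlap T p A₁ A₂

/-- `Q'` is a neighboring cell of `Q` in direction `ℓ`. -/
def NeighborInDir (T : TMesh d N) (Q Q' : Box d) (ℓ : Fin d) : Prop :=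
  Q' ∈ Hdim T d ∧ Q' ≠ Q ∧
  (sSup (Q ℓ) = sInf (Q' ℓ) ∨ sSup (Q' ℓ) = sInf (Q ℓ)) ∧
  ∀ k : Fin d, k ≠ ℓ → (Q k ∩ Q' k).Nonempty

/-- Assumption A: every cell has neighbor cells in the active region in at least three
pairwise distinct directions. -/
def AssumptionA (T : TMesh d N) (p : Fin d → ℕ) : Prop :=
  ∀ Q ∈ Hdim T d, ∃ l₁ l₂ l₃ : Fin d, l₁ ≠ l₂ ∧ l₁ ≠ l₃ ∧ l₂ ≠ l₃ ∧
    ∀ l ∈ ({l₁, l₂, l₃} : Set (Fin d)),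
      ∃ Q' : Box d, NeighborInDir T Q Q' l ∧ toSet Q' ⊆ activeRegion N p

/-- The extended region `D` of Algorithm `subdiv`. -/
def extendD (N p : Fin d → ℕ) (Q : Box d) (j : Fin d) : Box d := fun ℓ =>
  closure (Q ℓ) ∪
  {x : ℝ | ℓ ≠ j ∧ sInf (Q ℓ) = (halfdeg p ℓ : ℝ) ∧
      x ∈ Set.Icc (0 : ℝ) (halfdeg p ℓ : ℝ)} ∪
  {x : ℝ | ℓ ≠ j ∧ sSup (Q ℓ) = (N ℓ : ℝ) - (halfdeg p ℓ : ℝ) ∧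
      x ∈ Set.Icc ((N ℓ : ℝ) - (halfdeg p ℓ : ℝ)) (N ℓ : ℝ)}

/-- The entity set produced by Algorithm `subdiv(𝒯, Q, j)`. -/
def subdivEntities (N p : Fin d → ℕ) (M : Set (Box d)) (Q : Box d) (j : Fin d) :
    Set (Box d) :=
  midSplit M Q j ((sInf (Q j) + sSup (Q j)) / 2) (extendD N p Q j)

open Classical in
/-- The componentwise minimal bounding box `M(E,F)`. -/
noncomputable def MBox {d : ℕ} (E F : Box d) : Box d := fun ℓ =>
  if (E ℓ ∩ F ℓ).Nonempty then E ℓ ∩ F ℓ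
  else if sSup (E ℓ) ≤ sInf (F ℓ) then Set.Icc (sSup (E ℓ)) (sInf (F ℓ))
  else Set.Icc (sSup (F ℓ)) (sInf (E ℓ))

/-- `V` is the local knot vector of `E` (an anchor or a T-junction) in direction `j`. -/
def IsLocalKVOf (T : TMesh d N) (p : Fin d → ℕ) (E : Box d) (j : Fin d) (V : Set ℕ) :
    Prop :=
  (IsAnchor p T E ∧ IsAnchorKV T p E j V) ∨
  (IsTJunction T E ∧ IsTJKVFull T p E j V)

end TSpline

namespace TSpline

/-! ### The frontier condition -/

/-- The integer intervals `(a, b)` obtained from the gaps between consecutive elements of `G`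
by repeated symmetric bisection. -/
inductive Dyadic (G : Finset ℕ) : ℕ → ℕ → Prop
  | base {a b : ℕ} (ha : a ∈ G) (hb : b ∈ G) (hab : a < b) (h : ∀ c ∈ G, c ≤ a ∨ b ≤ c) :
      Dyadic G a b
  | left {a b m : ℕ} (h : Dyadic G a b) (hm : a + b = 2 * m) (hab : a < b) : Dyadic G a m
  | right {a b m : ℕ} (h : Dyadic G a b) (hm : a + b = 2 * m) (hab : a < b) : Dyadic G m b

theorem Dyadic.lt {G : Finset ℕ} {a b : ℕ} (h : Dyadic G a b) : a < b := by
  induction h with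
  | base _ _ h _ => exact h
  | left _ _ _ ih => omega
  | right _ _ _ ih => omega

/-- Mutual position of two dyadic intervals: disjoint, equal, or one inside a half of the
other. -/
def DyadicRel (a b a' b' : ℕ) : Prop :=
  (b ≤ a' ∨ b' ≤ a) ∨ (a = a' ∧ b = b') ∨
    (a' ≤ a ∧ b ≤ b' ∧ (2 * b ≤ a' + b' ∨ a' + b' ≤ 2 * a)) ∨
    (a ≤ a' ∧ b' ≤ b ∧ (2 * b' ≤ a + b ∨ a + b ≤ 2 * a'))

theorem DyadicRel.symm {a b a' b' : ℕ} (h : DyadicRel a b a' b') : DyadicRel a' b' a b := by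
  unfold DyadicRel at *; omega

/-- A dyadic interval that meets a gap of `G` is that gap or lies in one of its halves. -/
theorem dyadic_base {G : Finset ℕ} {a b a' b' : ℕ} (ha : a ∈ G) (hb : b ∈ G) (hab : a < b)
    (hc : ∀ c ∈ G, c ≤ a ∨ b ≤ c) (h : Dyadic G a' b') :
    (b ≤ a' ∨ b' ≤ a) ∨ (a = a' ∧ b = b') ∨
      (a ≤ a' ∧ b' ≤ b ∧ (2 * b' ≤ a + b ∨ a + b ≤ 2 * a')) := by
  induction h with
  | base ha' hb' hab' hc' =>
    have h1 := hc _ ha'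
    have h2 := hc _ hb'
    have h3 := hc' _ ha
    have h4 := hc' _ hb
    omega
  | left h hm _ ih => have := h.lt; omega
  | right h hm _ ih => have := h.lt; omega

theorem Dyadic.rel {G : Finset ℕ} {a b a' b' : ℕ} (h : Dyadic G a b) (h' : Dyadic G a' b') :
    DyadicRel a b a' b' := by
  induction h generalizing a' b' with
  | base ha hb hab hc =>
    have := dyadic_base ha hb hab hc h'
    unfold DyadicRel; tauto
  | left h hm hab ih =>
    induction h' with
    | base ha hb hab hc =>
      have := dyadic_base ha hb hab hc (h.left hm ‹_›)
      unfold DyadicRel; omega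
    | left h' hm' hab' ih' =>
      have h1 := ih (h'.left hm' hab')
      have h2 := h.lt
      unfold DyadicRel at *; omega
    | right h' hm' hab' ih' =>
      have h1 := ih (h'.right hm' hab')
      have h2 := h.lt
      unfold DyadicRel at *; omega
  | right h hm hab ih =>
    induction h' with
    | base ha hb hab hc =>
      have := dyadic_base ha hb hab hc (h.right hm ‹_›)
      unfold DyadicRel; omega
    | left h' hm' hab' ih' =>
      have h1 := ih (h'.left hm' hab')
      have h2 := h.lt
      unfold DyadicRel at *; omega
    | right h' hm' hab' ih' =>
      have h1 := ih (h'.right hm' hab')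
      have h2 := h.lt
      unfold DyadicRel at *; omega

theorem Ioo_nat_inj {a b c e : ℕ} (hab : a < b) (h : Ioo (a : ℝ) b = Ioo (c : ℝ) e) :
    a = c ∧ b = e := by
  have hab' : (a : ℝ) < b := by exact_mod_cast hab
  have hce : (c : ℝ) < e := by
    have : (Ioo (c : ℝ) e).Nonempty := h ▸ nonempty_Ioo.2 hab'
    exact nonempty_Ioo.1 this
  have h1 := congrArg sInf h
  have h2 := congrArg sSup h
  rw [csInf_Ioo hab', csInf_Ioo hce] at h1
  rw [csSup_Ioo hab', csSup_Ioo hce] at h2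
  exact ⟨by exact_mod_cast h1, by exact_mod_cast h2⟩

theorem closure_Ioo_nat {a b : ℕ} (hab : a < b) :
    closure (Ioo (a : ℝ) b) = Icc (a : ℝ) b :=
  closure_Ioo (by exact_mod_cast hab.ne)

/-- The property of a mesh that bisections preserve: interval components are dyadic, and an
entity which meets the closure of another entity lies in that closure. Since entities are boxes,
both the hypothesis and the conclusion of the latter are expressed componentwise. -/
structure Inv {d : ℕ} (G : Fin d → Finset ℕ) (M : Set (Box d)) : Prop where
  comp : ∀ E ∈ M, ∀ k, (∃ n : ℕ, E k = {(n : ℝ)}) ∨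
    ∃ a b : ℕ, Dyadic (G k) a b ∧ E k = Ioo (a : ℝ) b
  frontier : ∀ E ∈ M, ∀ F ∈ M, (∀ k, (E k ∩ closure (F k)).Nonempty) →
    ∀ k, E k ⊆ closure (F k)

theorem inv_tensor {d : ℕ} {G : Fin d → Finset ℕ} :
    Inv G {E : Box d | ∀ k, (∃ n ∈ G k, E k = {(n : ℝ)}) ∨
          (∃ a ∈ G k, ∃ b ∈ G k, a < b ∧ (∀ c ∈ G k, c ≤ a ∨ b ≤ c) ∧
            E k = Set.Ioo (a : ℝ) (b : ℝ))} := by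
  constructor
  · intro E hE k
    rcases hE k with ⟨n, _, h⟩ | ⟨a, ha, b, hb, hab, hc, h⟩
    · exact Or.inl ⟨n, h⟩
    · exact Or.inr ⟨a, b, .base ha hb hab hc, h⟩
  · intro E hE F hF hEF k
    obtain ⟨t, ht, ht'⟩ := hEF k
    rcases hE k with ⟨n, _, h⟩ | ⟨a, ha, b, hb, hab, hc, h⟩
    · rw [h] at ht ⊢
      rw [mem_singleton_iff] at ht
      rw [singleton_subset_iff, ← ht]
      exact ht'
    · rcases hF k with ⟨n, hn, h'⟩ | ⟨a', ha', b', hb', hab', hc', h'⟩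
      · rw [h', closure_singleton, mem_singleton_iff] at ht'
        rw [h, ht'] at ht
        have h1 : a < n := by exact_mod_cast ht.1
        have h2 : n < b := by exact_mod_cast ht.2
        have := hc n hn
        omega
      · rw [h'] at ht' ⊢
        rw [closure_Ioo_nat hab'] at ht' ⊢
        rw [h] at ht ⊢
        have h1 : a < b' := by exact_mod_cast ht.1.trans_le ht'.2
        have h2 : a' < b := by exact_mod_cast ht'.1.trans_lt ht.2
        have h3 := hc a' ha'
        have h4 := hc b' hb'
        have h5 : a' ≤ a := by omega
        have h6 : b ≤ b' := by omega
        exact Ioo_subset_Icc_self.trans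
          (Icc_subset_Icc (by exact_mod_cast h5) (by exact_mod_cast h6))

/-- The three pieces of `(a, b)` split at `m`. -/
def IsPiece (a m b : ℝ) (S : Set ℝ) : Prop := S = Ioo a m ∨ S = {m} ∨ S = Ioo m b

theorem IsPiece.subset_closure {a m b : ℝ} (ham : a < m) (hmb : m < b) {S S' : Set ℝ}
    (h : IsPiece a m b S) (h' : IsPiece a m b S') (hm : (S ∩ closure S').Nonempty) :
    S ⊆ closure S' := by
  obtain ⟨t, ht, ht'⟩ := hm
  rcases h with rfl | rfl | rfl <;> rcases h' with rfl | rfl | rfl <;>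
    simp only [closure_Ioo ham.ne, closure_Ioo hmb.ne, closure_singleton, mem_Ioo, mem_Icc,
      mem_singleton_iff] at ht ht' ⊢
  all_goals first
    | (exfalso; linarith [ht.1, ht'.2])
    | (exfalso; linarith [ht.2])
    | exact Ioo_subset_Icc_self
    | exact Subset.rfl
    | (rw [singleton_subset_iff]; constructor <;> linarith)

/-- An interval inside one of the halves of `(a, b)` respects the frontier condition with
respect to the three pieces. -/
theorem IsPiece.half_subset_closure {a m b c e : ℝ} (ham : a < m) (hmb : m < b)
    (hac : a ≤ c) (heb : e ≤ b) (hh : e ≤ m ∨ m ≤ c)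
    {S' : Set ℝ} (h' : IsPiece a m b S') (hm : (Ioo c e ∩ closure S').Nonempty) :
    Ioo c e ⊆ closure S' := by
  obtain ⟨t, ht, ht'⟩ := hm
  rcases h' with rfl | rfl | rfl <;>
    simp only [closure_Ioo ham.ne, closure_Ioo hmb.ne, closure_singleton, mem_Ioo, mem_Icc,
      mem_singleton_iff] at ht ht' ⊢
  · refine Ioo_subset_Icc_self.trans (Icc_subset_Icc hac ?_)
    rcases hh with h | h
    · exact h
    · linarith
  · exfalso
    rcases hh with h | h <;> linarith
  · refine Ioo_subset_Icc_self.trans (Icc_subset_Icc ?_ heb)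
    rcases hh with h | h
    · linarith
    · exact h

/-- Membership in a bisected mesh: an entity is old and unsplit, or it is a piece of a split
entity. -/
theorem mem_midSplit {d : ℕ} {M : Set (Box d)} {Q : Box d} {j : Fin d} {a b : ℝ} {m : ℝ}
    {D : Box d} (hab : a < b) (hQ : Q j = Ioo a b) {E' : Box d} (h : E' ∈ midSplit M Q j m D) :
    ∃ E ∈ M, (∀ k, k ≠ j → E' k = E k) ∧
      ((E' j = E j ∧ ¬ ((∀ k, E k ⊆ D k) ∧ E j = Q j)) ∨
       ((∀ k, E k ⊆ D k) ∧ E j = Q j ∧ IsPiece a m b (E' j))) := by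
  rcases h with ⟨h1, h2⟩ | h
  · refine ⟨E', h1, fun _ _ => rfl, Or.inl ⟨rfl, fun h => h2 ⟨h1, h⟩⟩⟩
  · simp only [mem_iUnion] at h
    obtain ⟨E, ⟨hE, hED, hEj⟩, h⟩ := h
    rw [hQ, csInf_Ioo hab, csSup_Ioo hab] at h
    refine ⟨E, hE, ?_, Or.inr ⟨hED, hEj, ?_⟩⟩
    · intro k hk
      rcases h with rfl | rfl | rfl <;> simp [hk]
    · rcases h with rfl | rfl | rfl <;> simp [IsPiece]

theorem inv_step {d : ℕ} {N : Fin d → ℕ} {G : Fin d → Finset ℕ} {M M' : Set (Box d)}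
    (hM : Inv G M) (h : BisectStep N M M') : Inv G M' := by
  obtain ⟨Q, hQM, j, a, b, m, hQ, hQj, hm, rfl⟩ := h
  -- The interval being bisected is itself dyadic.
  obtain ⟨hab, hdy⟩ : a < b ∧ Dyadic (G j) a b := by
    obtain ⟨a', b', hab', _, h'⟩ := hQ j
    obtain ⟨rfl, rfl⟩ := Ioo_nat_inj hab' (h'.symm.trans hQj)
    refine ⟨hab', ?_⟩
    rcases hM.comp Q hQM j with ⟨n, hn⟩ | ⟨a'', b'', hd, h''⟩
    · exfalso
      have hs : (Ioo (a' : ℝ) b').Subsingleton := by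
        rw [← hQj, hn]; exact subsingleton_singleton
      exact Ioo_infinite (show (a' : ℝ) < b' by exact_mod_cast hab') hs.finite
    · obtain ⟨rfl, rfl⟩ := Ioo_nat_inj hab' (hQj.symm.trans h'')
      exact hd
  have habR : (a : ℝ) < b := by exact_mod_cast hab
  have ham : (a : ℝ) < m := by exact_mod_cast (show a < m by omega)
  have hmb : (m : ℝ) < b := by exact_mod_cast (show m < b by omega)
  have hpiece : ∀ S : Set ℝ, IsPiece a m b S → S ⊆ Ioo (a : ℝ) b := by
    rintro S (rfl | rfl | rfl)
    · exact Ioo_subset_Ioo_right hmb.le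
    · exact singleton_subset_iff.2 ⟨ham, hmb⟩
    · exact Ioo_subset_Ioo_left ham.le
  constructor
  · intro E' hE' k
    obtain ⟨E, hE, hne, hj⟩ := mem_midSplit habR hQj hE'
    by_cases hk : k = j
    · subst hk
      rcases hj with ⟨h1, _⟩ | ⟨_, _, h | h | h⟩
      · rw [h1]; exact hM.comp E hE k
      · exact Or.inr ⟨a, m, hdy.left hm hab, h⟩
      · exact Or.inl ⟨m, h⟩
      · exact Or.inr ⟨m, b, hdy.right hm hab, h⟩
    · rw [hne k hk]; exact hM.comp E hE k
  · intro E' hE' F' hF' hEF'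
    obtain ⟨E, hE, hEne, hEj⟩ := mem_midSplit habR hQj hE'
    obtain ⟨F, hF, hFne, hFj⟩ := mem_midSplit habR hQj hF'
    have sub : ∀ {A A' : Box d}, (∀ k, k ≠ j → A' k = A k) →
        ((A' j = A j ∧ ¬ ((∀ k, A k ⊆ closure (Q k)) ∧ A j = Q j)) ∨
          ((∀ k, A k ⊆ closure (Q k)) ∧ A j = Q j ∧ IsPiece a m b (A' j))) →
        ∀ k, A' k ⊆ A k := by
      intro A A' h1 h2 k
      by_cases hk : k = j
      · subst hk
        rcases h2 with ⟨h, _⟩ | ⟨_, h, hp⟩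
        · exact h.le
        · rw [h, hQj]; exact hpiece _ hp
      · exact (h1 k hk).le
    have hEE := sub hEne hEj
    have hFF := sub hFne hFj
    have hEF : ∀ k, E k ⊆ closure (F k) := hM.frontier E hE F hF fun k =>
      (hEF' k).mono (inter_subset_inter (hEE k) (closure_mono (hFF k)))
    intro k
    by_cases hk : k = j
    · subst hk
      rcases hFj with ⟨h, _⟩ | ⟨hFQ, hFk, hp⟩
      · rw [h]; exact (hEE k).trans (hEF k)
      · have hEQ : ∀ l, E l ⊆ closure (Q l) := fun l =>
          (hEF l).trans (closure_minimal (hFQ l) isClosed_closure)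
        rcases hEj with ⟨h, hns⟩ | ⟨_, _, hp'⟩
        · have hEk : E k ≠ Q k := fun h => hns ⟨hEQ, h⟩
          have hmeet := hEF' k
          rw [h] at hmeet ⊢
          have hsub := hEQ k
          rcases hM.comp E hE k with ⟨n, hn⟩ | ⟨c, e, hd, hce⟩
          · rw [hn] at hmeet ⊢
            obtain ⟨t, ht, ht'⟩ := hmeet
            rw [mem_singleton_iff] at ht
            rw [singleton_subset_iff, ← ht]
            exact ht'
          · have hlt := hd.lt
            rw [hce] at hmeet ⊢
            rw [hce, hQj] at hsub
            -- The unsplit interval lies in `[a, b]` and differs from `(a, b)`, hence lies in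
            -- one of its halves.
            have hcl := closure_mono hsub
            rw [closure_closure, closure_Ioo_nat hlt, closure_Ioo_nat hab,
              Icc_subset_Icc_iff (by exact_mod_cast hlt.le)] at hcl
            have h1 : a ≤ c := by exact_mod_cast hcl.1
            have h2 : e ≤ b := by exact_mod_cast hcl.2
            have hne : ¬ (c = a ∧ e = b) := by
              rintro ⟨rfl, rfl⟩
              exact hEk (hce.trans hQj.symm)
            have hr := hd.rel hdy
            have hh : e ≤ m ∨ m ≤ c := by unfold DyadicRel at hr; omega
            exact IsPiece.half_subset_closure ham hmb hcl.1 hcl.2 (by exact_mod_cast hh) hp hmeet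
        · exact hp'.subset_closure ham hmb hp (hEF' k)
    · rw [hEne k hk, hFne k hk]; exact hEF k

/-- An entity `E` that meets the closure of an entity `F` in a point `q` is contained in it. This
is where the construction of the mesh by symmetric bisections enters. -/
theorem TMesh.frontier_condition {d : ℕ} {N : Fin d → ℕ} (T : TMesh d N) {E F : Box d}
    (hE : E ∈ T.entities) (hF : F ∈ T.entities) {q : Fin d → ℝ} (hqE : ∀ k, q k ∈ E k)
    (hqF : ∀ k, q k ∈ closure (F k)) : ∀ k, E k ⊆ closure (F k) := by
  obtain ⟨M₀, ⟨G, -, h₀⟩, hs⟩ := T.constructed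
  have inv : ∀ M, Relation.ReflTransGen (BisectStep N) M₀ M → Inv G M := by
    intro M hs
    induction hs with
    | refl => exact h₀ ▸ inv_tensor
    | tail _ h ih => exact inv_step ih h
  exact (inv _ hs).frontier E hE F hF fun k => ⟨q k, hqE k, hqF k⟩

/-! ### Entities near a point -/

/-- `g` lies in an open unit interval with integer endpoints whose closure contains `z`. Thus
`g` is not an integer, and no integer lies strictly between `z` and `g`. -/
def UnitNear (z g : ℝ) : Prop :=
  ∃ m : ℤ, g ∈ Ioo (m : ℝ) (m + 1) ∧ z ∈ Icc (m : ℝ) (m + 1)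

theorem UnitNear.ne_nat {z g : ℝ} (h : UnitNear z g) (n : ℕ) : g ≠ n := by
  rintro rfl
  obtain ⟨m, ⟨h1, h2⟩, _⟩ := h
  have h1' : m < (n : ℤ) := by exact_mod_cast h1
  have h2' : (n : ℤ) < m + 1 := by exact_mod_cast h2
  omega

theorem UnitNear.le_of_nat_lt {z g : ℝ} (h : UnitNear z g) {n : ℕ} (hn : n < g) : n ≤ z := by
  obtain ⟨m, ⟨_, h2⟩, h3, _⟩ := h
  have h1 : (n : ℤ) < m + 1 := by exact_mod_cast hn.trans h2
  have h4 : (n : ℝ) ≤ m := by exact_mod_cast (show (n : ℤ) ≤ m by omega)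
  exact h4.trans h3

theorem UnitNear.le_of_lt_nat {z g : ℝ} (h : UnitNear z g) {n : ℕ} (hn : g < n) : z ≤ n := by
  obtain ⟨m, ⟨h2, _⟩, _, h3⟩ := h
  have h1 : m < (n : ℤ) := by exact_mod_cast h2.trans hn
  have h4 : (m : ℝ) + 1 ≤ n := by exact_mod_cast (show m + 1 ≤ (n : ℤ) by omega)
  exact h3.trans h4

theorem UnitNear.mem_Icc {z g : ℝ} (h : UnitNear z g) {a b : ℕ} (hg : g ∈ Ioo (a : ℝ) b) :
    z ∈ Icc (a : ℝ) b :=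
  ⟨h.le_of_nat_lt hg.1, h.le_of_lt_nat hg.2⟩

theorem exists_unitNear {z : ℝ} {a b : ℕ} (hab : a < b) (hz : z ∈ Icc (a : ℝ) b) :
    ∃ g ∈ Ioo (a : ℝ) b, UnitNear z g := by
  rcases hz.2.eq_or_lt with h | h
  · have hab' : (a : ℝ) + 1 ≤ b := by exact_mod_cast hab
    refine ⟨b - 1 / 2, ⟨by linarith, by linarith⟩, (b : ℤ) - 1, ?_, ?_⟩
    · push_cast; constructor <;> linarith
    · push_cast; constructor <;> linarith
  · have h1 : (a : ℤ) ≤ ⌊z⌋ := Int.le_floor.2 (by exact_mod_cast hz.1)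
    have h2 : ⌊z⌋ < (b : ℤ) := Int.floor_lt.2 (by exact_mod_cast h)
    have h1' : (a : ℝ) ≤ ⌊z⌋ := by exact_mod_cast h1
    have h2' : (⌊z⌋ : ℝ) + 1 ≤ b := by exact_mod_cast h2
    exact ⟨⌊z⌋ + 1 / 2, ⟨by linarith, by linarith⟩, ⌊z⌋, ⟨by linarith, by linarith⟩,
      Int.floor_le z, (Int.lt_floor_add_one z).le⟩

open Filter Topology in
theorem eventually_unitNear (z : ℝ) {v : ℝ} (hv : v ≠ 0) :
    ∀ᶠ δ in 𝓝[>] (0 : ℝ), UnitNear z (z + δ * v) := by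
  have hc : Tendsto (fun δ : ℝ => z + δ * v) (𝓝[>] 0) (𝓝 z) := by
    have : Continuous fun δ : ℝ => z + δ * v := by fun_prop
    have := this.tendsto 0
    simp only [zero_mul, add_zero] at this
    exact this.mono_left nhdsWithin_le_nhds
  have hpos : ∀ᶠ δ in 𝓝[>] (0 : ℝ), 0 < δ := self_mem_nhdsWithin
  rcases hv.lt_or_gt with hv | hv
  · have h1 : ((⌈z⌉ - 1 : ℤ) : ℝ) < z := by
      push_cast; linarith [Int.ceil_lt_add_one z]
    filter_upwards [hpos, hc.eventually (lt_mem_nhds h1)] with δ hδ h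
    have := mul_neg_of_pos_of_neg hδ hv
    have h2 := Int.le_ceil z
    refine ⟨⌈z⌉ - 1, ⟨h, ?_⟩, h1.le, ?_⟩
    · push_cast; linarith
    · push_cast; linarith
  · filter_upwards [hpos, hc.eventually (gt_mem_nhds (Int.lt_floor_add_one z))] with δ hδ h
    have := mul_pos hδ hv
    have h2 := Int.floor_le z
    exact ⟨⌊z⌋, ⟨by linarith, h⟩, h2, (Int.lt_floor_add_one z).le⟩

theorem IsIntervalComp.not_singleton {n : ℕ} {S : Set ℝ} (h : IsIntervalComp n S) :
    ¬ ∃ r, S = {r} := by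
  rintro ⟨r, hr⟩
  obtain ⟨a, b, hab, _, rfl⟩ := h
  have hs : (Ioo (a : ℝ) b).Subsingleton := by rw [hr]; exact subsingleton_singleton
  exact Ioo_infinite (show (a : ℝ) < b by exact_mod_cast hab) hs.finite

theorem UnitNear.mem_Ioo {z g : ℝ} (h : UnitNear z g) {a b : ℕ} (hz : z ∈ Ioo (a : ℝ) b) :
    g ∈ Ioo (a : ℝ) b := by
  constructor
  · by_contra! hg
    have := h.le_of_lt_nat (lt_of_le_of_ne hg (h.ne_nat a))
    linarith [hz.1]
  · by_contra! hg
    have := h.le_of_nat_lt (lt_of_le_of_ne hg (h.ne_nat b).symm)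
    linarith [hz.2]

variable {d : ℕ} {N : Fin d → ℕ}

theorem TMesh.interval_of_not_singleton (T : TMesh d N) {E : Box d} (hE : E ∈ T.entities)
    {l : Fin d} (h : ¬ ∃ r, E l = {r}) : IsIntervalComp (N l) (E l) := by
  rcases T.mem_entity E hE l with ⟨n, _, hn⟩ | h'
  · exact absurd ⟨_, hn⟩ h
  · exact h'

theorem TMesh.interval_of_unitNear (T : TMesh d N) {E : Box d} (hE : E ∈ T.entities)
    {l : Fin d} {z g : ℝ} (h : UnitNear z g) (hg : g ∈ E l) : IsIntervalComp (N l) (E l) := by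
  rcases T.mem_entity E hE l with ⟨n, _, hn⟩ | h'
  · rw [hn] at hg
    exact absurd hg (h.ne_nat n)
  · exact h'

theorem TMesh.eq_of_mem (T : TMesh d N) {E F : Box d} (hE : E ∈ T.entities)
    (hF : F ∈ T.entities) {q : Fin d → ℝ} (hqE : ∀ l, q l ∈ E l) (hqF : ∀ l, q l ∈ F l) :
    E = F := by
  by_contra h
  have := T.pairwise_disjoint E hE F hF h
  have hq : q ∈ toSet E ∩ toSet F := ⟨fun l _ => hqE l, fun l _ => hqF l⟩
  rw [this] at hq
  exact hq

theorem TMesh.exists_entity (T : TMesh d N) {q : Fin d → ℝ}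
    (hq : ∀ l, q l ∈ Icc (0 : ℝ) (N l)) : ∃ E ∈ T.entities, ∀ l, q l ∈ E l := by
  have h : q ∈ ⋃ E ∈ T.entities, toSet E := by
    rw [T.union_eq]; exact fun l _ => hq l
  simp only [mem_iUnion] at h
  obtain ⟨E, hE, h⟩ := h
  exact ⟨E, hE, fun l => h l trivial⟩

theorem closure_toSet (E : Box d) : closure (toSet E) = Set.pi univ fun l => closure (E l) :=
  closure_pi_set _ _

theorem mem_Hdim_iff {d : ℕ} {N : Fin d → ℕ} {T : TMesh d N} {m : ℕ} {E : Box d} :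
    E ∈ Hdim T m ↔ E ∈ T.entities ∧ (singDirs E).ncard = d - m := Iff.rfl

/-- A hyperface that is orthogonal to `i` has interval components in all other directions. -/
theorem interval_of_hyperface (T : TMesh d N) {F : Box d} (hd : 1 ≤ d) (hF : F ∈ Hdim T (d - 1))
    {i : Fin d} (hi : ∃ r, F i = {r}) {l : Fin d} (hl : l ≠ i) : IsIntervalComp (N l) (F l) := by
  apply T.interval_of_not_singleton hF.1
  intro h
  have h1 : (singDirs F).ncard = 1 := by have := hF.2; omega
  obtain ⟨j, hj⟩ := ncard_eq_one.1 h1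
  have hi' : i ∈ singDirs F := hi
  have hl' : l ∈ singDirs F := h
  rw [hj, mem_singleton_iff] at hi' hl'
  exact hl (hl'.trans hi'.symm)

theorem hyperface_of_interval (T : TMesh d N) {F : Box d} (hd : 1 ≤ d) (hF : F ∈ T.entities)
    {i : Fin d} (hi : ∃ r, F i = {r}) (h : ∀ l, l ≠ i → IsIntervalComp (N l) (F l)) :
    F ∈ Hdim T (d - 1) := by
  refine ⟨hF, ?_⟩
  have : singDirs F = {i} := by
    ext l
    constructor
    · intro hl
      by_contra hne
      exact (h l hne).not_singleton hl
    · rintro rfl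
      exact hi
  rw [this, ncard_singleton]
  omega

/-! ### The T-junction between a cell and an adjacent hyperface -/

/-- Let `z` be a point, and let `g`, `g'` be near `z`, equal to `z` in direction `i` and
different from each other in direction `k` only. If `g` lies in a cell `Q` but `g'` in an
`i`-orthogonal hyperface, then the entity that contains `g` with the `k`-th coordinate moved to
`z k` is a T-junction with associated cell `Q`, orthogonal direction `i` and pointing direction
`k`. -/
theorem exists_tjunction_of_cross (hd : 2 ≤ d) (T : TMesh d N) {i k : Fin d} (hik : k ≠ i)
    {z g g' : Fin d → ℝ} (hgi : g i = z i) (hg : ∀ l, l ≠ i → UnitNear (z l) (g l))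
    (hg' : UnitNear (z k) (g' k)) (hgg : ∀ l, l ≠ k → g' l = g l) {Q P : Box d}
    (hQ : Q ∈ T.entities) (hP : P ∈ T.entities) (hgQ : ∀ l, g l ∈ Q l) (hgP : ∀ l, g' l ∈ P l)
    (hQi : IsIntervalComp (N i) (Q i)) (hPi : ∃ r, P i = {r}) :
    ∃ J, IsTJunction T J ∧ TJData T J Q i k ∧ z ∈ closure (toSet J) ∧ J i = {z i} := by
  have hQint : ∀ l, IsIntervalComp (N l) (Q l) := fun l => by
    by_cases hl : l = i
    · exact hl ▸ hQi
    · exact T.interval_of_unitNear hQ (hg l hl) (hgQ l)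
  have hPint : ∀ l, l ≠ i → IsIntervalComp (N l) (P l) := fun l hl => by
    by_cases hlk : l = k
    · subst hlk; exact T.interval_of_unitNear hP hg' (hgP l)
    · exact T.interval_of_unitNear hP (hgg l hlk ▸ hg l hl) (hgP l)
  have hQP : Q ≠ P := by
    rintro rfl
    exact hQi.not_singleton hPi
  have hPi' : P i = {z i} := by
    obtain ⟨r, hr⟩ := hPi
    have := hgP i
    rw [hr, mem_singleton_iff, hgg i hik.symm, hgi] at this
    rw [hr, this]
  obtain ⟨a, b, hab, hbN, hQk⟩ := hQint k
  have habR : (a : ℝ) < b := by exact_mod_cast hab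
  have hbNR : (b : ℝ) ≤ N k := by exact_mod_cast hbN
  have hgk : g k ∈ Ioo (a : ℝ) b := hQk ▸ hgQ k
  have hzk : z k ∈ Icc (a : ℝ) b := (hg k hik).mem_Icc hgk
  -- `g'` is not in `Q`, which forces `z k` to be an endpoint of `Q k`.
  have hg'Q : g' k ∉ Q k := fun h => hQP <| T.eq_of_mem hQ hP (q := g') (fun l => by
    by_cases hl : l = k
    · exact hl ▸ h
    · rw [hgg l hl]; exact hgQ l) hgP
  have hzQ : z k ∉ Ioo (a : ℝ) b := fun h => hg'Q (hQk ▸ hg'.mem_Ioo h)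
  have hzab : z k = a ∨ z k = b := by
    by_contra! h
    exact hzQ ⟨lt_of_le_of_ne hzk.1 h.1.symm, lt_of_le_of_ne hzk.2 h.2⟩
  obtain ⟨c, e, hce, heN, hPk⟩ := hPint k hik
  have heNR : (e : ℝ) ≤ N k := by exact_mod_cast heN
  have hg'k : g' k ∈ Ioo (c : ℝ) e := hPk ▸ hgP k
  have hc0 : (0 : ℝ) ≤ c := Nat.cast_nonneg c
  have ha0 : (0 : ℝ) ≤ a := Nat.cast_nonneg a
  -- `g k` and `g' k` lie on opposite sides of `z k`.
  have hsides : (z k = a ∧ g' k < z k) ∨ (z k = b ∧ z k < g' k) := by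
    rw [hQk] at hg'Q
    rcases hzab with h | h
    · refine Or.inl ⟨h, ?_⟩
      by_contra! h'
      have h1 : (a : ℝ) < g' k := lt_of_le_of_ne (h ▸ h') (hg'.ne_nat a).symm
      refine hg'Q ⟨h1, ?_⟩
      by_contra! h2
      have := hg'.le_of_nat_lt (lt_of_le_of_ne h2 (hg'.ne_nat b).symm)
      linarith
    · refine Or.inr ⟨h, ?_⟩
      by_contra! h'
      have h1 : g' k < (b : ℝ) := lt_of_le_of_ne (h ▸ h') (hg'.ne_nat b)
      refine hg'Q ⟨?_, h1⟩
      by_contra! h2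
      have := hg'.le_of_lt_nat (lt_of_le_of_ne h2 (hg'.ne_nat a))
      linarith
  have hzN : z k ∈ Ioo (0 : ℝ) (N k) := by
    rcases hsides with ⟨h1, h2⟩ | ⟨h1, h2⟩
    · exact ⟨by linarith [hg'k.1], by linarith [hgk.2]⟩
    · exact ⟨by linarith [hgk.1], by linarith [hg'k.2]⟩
  -- The entity `J` through the point `q` of the `k`-orthogonal face of `Q`.
  set q : Fin d → ℝ := Function.update g k (z k) with hq
  have hqk : q k = z k := by simp [hq]
  have hql : ∀ l, l ≠ k → q l = g l := fun l hl => by simp [hq, hl]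
  have hqi : q i = z i := (hql i hik.symm).trans hgi
  have hqN : ∀ l, q l ∈ Ioo (0 : ℝ) (N l) := fun l => by
    by_cases hl : l = k
    · subst hl; rw [hqk]; exact hzN
    · rw [hql l hl]
      obtain ⟨a', b', _, hb', h'⟩ := hQint l
      have := hgQ l
      rw [h'] at this
      have hb'R : (b' : ℝ) ≤ N l := by exact_mod_cast hb'
      have ha'R : (0 : ℝ) ≤ a' := Nat.cast_nonneg a'
      exact ⟨by linarith [this.1], by linarith [this.2]⟩
  obtain ⟨J, hJ, hqJ⟩ := T.exists_entity fun l => Ioo_subset_Icc_self (hqN l)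
  have hJQ : ∀ l, J l ⊆ closure (Q l) := T.frontier_condition hJ hQ hqJ fun l => by
    by_cases hl : l = k
    · subst hl; rw [hqk, hQk, closure_Ioo_nat hab]; exact hzk
    · rw [hql l hl]; exact subset_closure (hgQ l)
  have hJP : ∀ l, J l ⊆ closure (P l) := T.frontier_condition hJ hP hqJ fun l => by
    by_cases hl : l = k
    · subst hl; rw [hqk, hPk, closure_Ioo_nat hce]; exact hg'.mem_Icc hg'k
    · rw [hql l hl, ← hgg l hl]; exact subset_closure (hgP l)
  have hJi : J i = {z i} := by
    refine Subset.antisymm ?_ (singleton_subset_iff.2 (hqi ▸ hqJ i))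
    have := hJP i
    rwa [hPi', closure_singleton] at this
  have hJk : J k = {z k} := by
    have hz : z k ∈ J k := hqk ▸ hqJ k
    rcases T.mem_entity J hJ k with ⟨n, _, hn⟩ | ⟨a', b', hab', _, h'⟩
    · rw [hn] at hz ⊢
      rw [mem_singleton_iff.1 hz]
    · exfalso
      have hcl := closure_mono (hJQ k)
      rw [closure_closure, h', hQk, closure_Ioo_nat hab', closure_Ioo_nat hab,
        Icc_subset_Icc_iff (by exact_mod_cast hab'.le)] at hcl
      rw [h'] at hz
      rcases hzab with h | h
      · linarith [hz.1, hcl.1]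
      · linarith [hz.2, hcl.2]
  have hJint : ∀ l, l ≠ i → l ≠ k → IsIntervalComp (N l) (J l) := fun l hl hlk =>
    T.interval_of_unitNear hJ (hg l hl) (hql l hlk ▸ hqJ l)
  have hJsing : singDirs J = {i, k} := by
    ext l
    simp only [mem_insert_iff, mem_singleton_iff]
    constructor
    · intro h
      by_contra! hne
      exact (hJint l hne.1 hne.2).not_singleton h
    · rintro (rfl | rfl)
      · exact ⟨_, hJi⟩
      · exact ⟨_, hJk⟩
  obtain ⟨u, v, huv, hvN, hQi'⟩ := hQi
  have huvR : (u : ℝ) < v := by exact_mod_cast huv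
  have hziQ : z i ∈ Ioo (u : ℝ) v := by rw [← hQi', ← hgi]; exact hgQ i
  have hJQi : J i ≠ Q i := fun h => (hQint i).not_singleton ⟨_, h ▸ hJi⟩
  have hQopen : IsOpen (toSet Q) := isOpen_set_pi finite_univ fun l _ => by
    obtain ⟨_, _, _, _, h⟩ := hQint l
    rw [h]; exact isOpen_Ioo
  have hzJ : z ∈ closure (toSet J) := by
    rw [closure_toSet]
    intro l _
    by_cases hl : l = i
    · subst hl; show z l ∈ closure (J l); rw [hJi]; exact subset_closure rfl
    by_cases hlk : l = k
    · subst hlk; show z l ∈ closure (J l); rw [hJk]; exact subset_closure rfl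
    obtain ⟨a', b', hab', _, h'⟩ := hJint l hl hlk
    show z l ∈ closure (J l)
    rw [h', closure_Ioo_nat hab']
    apply (hg l hl).mem_Icc
    rw [← h', ← hql l hlk]; exact hqJ l
  refine ⟨J, ⟨⟨hJ, ?_⟩, ?_, ?_⟩, ?_, hzJ, hJi⟩
  · rw [hJsing, ncard_pair hik.symm]; omega
  · intro h
    have h1 := h (fun l _ => hqJ l : q ∈ toSet J)
    apply h1.2
    rw [domain, interior_pi_set finite_univ]
    intro l _
    show q l ∈ interior (Icc (0 : ℝ) (N l))
    rw [interior_Icc]; exact hqN l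
  · -- The hyperfaces around `J` are `P` and those containing a point `q ± eᵢ / 2`.
    obtain ⟨n, -, hn⟩ : IsSingletonComp (N i) (J i) := by
      rcases T.mem_entity J hJ i with h | h
      · exact h
      · exact absurd ⟨_, hJi⟩ h.not_singleton
    have hzn : z i = n := by
      rw [hJi] at hn; exact singleton_injective hn
    have hnN : 0 < n ∧ n < N i := by
      have := hqN i
      rw [hqi, hzn] at this
      exact ⟨by exact_mod_cast this.1, by exact_mod_cast this.2⟩
    have h0n : (1 : ℝ) ≤ n := by exact_mod_cast hnN.1
    have hnNR : (n : ℝ) + 1 ≤ N i := by exact_mod_cast hnN.2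
    have hex : ∀ t ∈ Icc (0 : ℝ) (N i),
        ∃ E ∈ T.entities, ∀ l, Function.update q i t l ∈ E l := fun t ht =>
      T.exists_entity fun l => by
        by_cases hl : l = i
        · subst hl; simpa using ht
        · rw [Function.update_of_ne hl]; exact Ioo_subset_Icc_self (hqN l)
    obtain ⟨A, hA, hqA⟩ := hex (n + 1 / 2) ⟨by linarith, by linarith⟩
    obtain ⟨B, hB, hqB⟩ := hex (n - 1 / 2) ⟨by linarith, by linarith⟩
    have hsub : {F ∈ Hdim T (d - 1) | toSet J ⊆ frontier (toSet F)} ⊆ {P, A, B} := by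
      rintro F ⟨hF, hJF⟩
      have hqF : ∀ l, q l ∈ closure (F l) := by
        have := frontier_subset_closure (hJF (fun l _ => hqJ l : q ∈ toSet J))
        rw [closure_toSet] at this
        exact fun l => this l trivial
      have hJF' := T.frontier_condition hJ hF.1 hqJ hqF
      have hFint : ∀ l, l ≠ i → l ≠ k → IsIntervalComp (N l) (F l) := fun l hl hlk => by
        apply T.interval_of_not_singleton hF.1
        rintro ⟨r, hr⟩
        have h := hJF' l
        rw [hr, closure_singleton] at h
        exact (hJint l hl hlk).not_singleton
          ⟨q l, (subsingleton_singleton.anti h).eq_singleton_of_mem (hqJ l)⟩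
      have hqF' : ∀ l, l ≠ i → l ≠ k → g l ∈ F l := fun l hl hlk => by
        obtain ⟨a', b', hab', _, h'⟩ := hFint l hl hlk
        have h := hqF l
        rw [h', closure_Ioo_nat hab', hql l hlk] at h
        rw [h']
        exact ⟨lt_of_le_of_ne h.1 ((hg l hl).ne_nat _).symm,
          lt_of_le_of_ne h.2 ((hg l hl).ne_nat _)⟩
      by_cases hFi : ∃ r, F i = {r}
      · -- `F` is orthogonal to `i`, so it lies across the face of `Q` and contains `g'`.
        left
        have hFk := interval_of_hyperface T (by omega) hF hFi hik
        have hziF : z i ∈ F i := by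
          obtain ⟨r, hr⟩ := hFi
          have := hqF i
          rwa [hr, closure_singleton, hqi, ← hr] at this
        have hgF : g k ∉ F k := fun h => by
          have : Q = F := T.eq_of_mem hQ hF.1 hgQ fun l => by
            by_cases hl : l = i
            · subst hl; rw [hgi]; exact hziF
            by_cases hlk : l = k
            · exact hlk ▸ h
            · exact hqF' l hl hlk
          exact (hQint i).not_singleton (this ▸ hFi)
        have hg'F : g' k ∈ F k := by
          obtain ⟨a', b', hab', _, h'⟩ := hFk
          have hz := hqF k
          rw [h', closure_Ioo_nat hab', hqk] at hz
          rw [h'] at hgF ⊢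
          have hab'R : (a' : ℝ) + 1 ≤ b' := by exact_mod_cast hab'
          have hgn := hg k hik
          have hzF : z k ∉ Ioo (a' : ℝ) b' := fun h => hgF (hgn.mem_Ioo h)
          rcases hsides with ⟨h1, h2⟩ | ⟨h1, h2⟩
          · have h3 : z k = b' := by
              by_contra hne
              have h4 : z k < b' := lt_of_le_of_ne hz.2 hne
              refine hgF ⟨by linarith [hgk.1, hz.1], ?_⟩
              by_contra! h5
              have := hgn.le_of_nat_lt (lt_of_le_of_ne h5 (hgn.ne_nat b').symm)
              linarith
            refine ⟨?_, by linarith⟩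
            by_contra! h5
            have := hg'.le_of_lt_nat (lt_of_le_of_ne h5 (hg'.ne_nat a'))
            linarith
          · have h3 : z k = a' := by
              by_contra hne
              have h4 : a' < z k := lt_of_le_of_ne hz.1 (Ne.symm hne)
              refine hgF ⟨?_, by linarith [hgk.2, hz.2]⟩
              by_contra! h5
              have := hgn.le_of_lt_nat (lt_of_le_of_ne h5 (hgn.ne_nat a'))
              linarith
            refine ⟨by linarith, ?_⟩
            by_contra! h5
            have := hg'.le_of_nat_lt (lt_of_le_of_ne h5 (hg'.ne_nat b').symm)
            linarith
        refine T.eq_of_mem hF.1 hP (q := g') (fun l => ?_) hgP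
        by_cases hlk : l = k
        · exact hlk ▸ hg'F
        rw [hgg l hlk]
        by_cases hl : l = i
        · subst hl; rw [hgi]; exact hziF
        · exact hqF' l hl hlk
      · right
        obtain ⟨a', b', hab', _, h'⟩ := T.interval_of_not_singleton hF.1 hFi
        have hFk : q k ∈ F k := by
          by_cases hFk : ∃ r, F k = {r}
          · obtain ⟨r, hr⟩ := hFk
            have := hqF k
            rwa [hr, closure_singleton, ← hr] at this
          · exfalso
            have h1 : (singDirs F).ncard = 1 := by have := hF.2; omega
            obtain ⟨j, hj⟩ := ncard_eq_one.1 h1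
            have hjs : j ∈ singDirs F := hj ▸ mem_singleton j
            by_cases hji : j = i
            · exact hFi (hji ▸ hjs)
            by_cases hjk : j = k
            · exact hFk (hjk ▸ hjs)
            exact (hFint j hji hjk).not_singleton hjs
        have hside : ∀ t ∈ F i, ∀ l, Function.update q i t l ∈ F l := fun t ht l => by
          by_cases hl : l = i
          · subst hl; simpa using ht
          rw [Function.update_of_ne hl]
          by_cases hlk : l = k
          · exact hlk ▸ hFk
          · rw [hql l hlk]; exact hqF' l hl hlk
        have hz := hqF i
        rw [h', closure_Ioo_nat hab', hqi, hzn] at hz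
        have hz1 : a' ≤ n := by exact_mod_cast hz.1
        have hz2 : n ≤ b' := by exact_mod_cast hz.2
        by_cases hnb : n < b'
        · left
          have : (n : ℝ) + 1 ≤ b' := by exact_mod_cast hnb
          exact T.eq_of_mem hF.1 hA
            (hside _ (by rw [h']; exact ⟨by linarith [hz.1], by linarith⟩)) hqA
        · right
          have : (a' : ℝ) + 1 ≤ n := by exact_mod_cast (show a' + 1 ≤ n by omega)
          exact T.eq_of_mem hF.1 hB
            (hside _ (by rw [h']; exact ⟨by linarith, by linarith [hz.2]⟩)) hqB
    have h1 := ncard_le_ncard hsub (toFinite _)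
    have h2 := ncard_insert_le P {A, B}
    have h3 := ncard_insert_le A {B}
    rw [ncard_singleton] at h3
    unfold valence
    omega
  · refine ⟨⟨hQ, ?_⟩, ?_, ?_, hik.symm, ⟨_, hJi⟩, ⟨_, hJk⟩, ?_, hJQi, ?_⟩
    · have : singDirs Q = ∅ := by
        ext l
        simp only [mem_empty_iff_false, iff_false]
        exact (hQint l).not_singleton
      rw [this, ncard_empty]; omega
    · intro p hp
      refine ⟨?_, ?_⟩
      · rw [closure_toSet]
        exact fun l _ => hJQ l (hp l trivial)
      · rw [hQopen.interior_eq]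
        intro hp'
        exact hJQi (congrFun
          (T.eq_of_mem hJ hQ (fun l => hp l trivial) (fun l => hp' l trivial)) i)
    · rw [eq_empty_iff_forall_notMem]
      rintro p ⟨hp, hp'⟩
      rw [closure_toSet] at hp
      have h1 : p i ∈ closure (J i) := hp i trivial
      have h2 : p i ∈ frontier (Q i) := hp' i trivial
      rw [hJi, closure_singleton, mem_singleton_iff] at h1
      rw [hQi', frontier_Ioo huvR, h1] at h2
      rcases h2 with h2 | h2
      · linarith [hziQ.1]
      · rw [mem_singleton_iff] at h2; linarith [hziQ.2]
    · rw [hJi, hQi']; exact singleton_subset_iff.2 hziQ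
    · rw [hJk, hQk, frontier_Ioo habR]; exact singleton_subset_iff.2 hzab

end TSpline

/-- If `x, y ∈ cl Ω` are aligned in direction `i`, `x ∈ Sk_i` and
`y ∉ Sk_i`, then there is an `i`-orthogonal T-junction and its associated cell between
them. -/
theorem TSpline.skeleton_gap_has_tjunction
    {d : ℕ} {N : Fin d → ℕ} (hd : 2 ≤ d) (T : TSpline.TMesh d N) (i : Fin d)
    (x y : Fin d → ℝ) (hx : x ∈ TSpline.domain N) (hy : y ∈ TSpline.domain N)
    (hxyi : x i = y i) (hxs : x ∈ TSpline.skel T i) (hys : y ∉ TSpline.skel T i) :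
    ∃ J Q : TSpline.Box d, ∃ k : Fin d,
      TSpline.IsTJunction T J ∧ TSpline.TJData T J Q i k ∧
      (closure (TSpline.toSet J) ∩ segment ℝ x y).Nonempty ∧
      x k ≠ y k ∧
      (Q k ∩ Set.uIcc (x k) (y k)).Nonempty ∧
      J i = {x i} := by
  classical
  have hdx : ∀ l, x l ∈ Icc (0 : ℝ) (N l) := fun l => hx l trivial
  have hdy : ∀ l, y l ∈ Icc (0 : ℝ) (N l) := fun l => hy l trivial
  -- The last point `z = p s` of the segment that lies on the skeleton.
  let p : ℝ → Fin d → ℝ := fun s l => x l + s * (y l - x l)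
  have hp_cont : Continuous p := by fun_prop
  have hclosed : IsClosed (TSpline.skel T i) := by
    refine Set.Finite.isClosed_biUnion ?_ fun _ _ => isClosed_closure
    exact T.finite.subset fun F hF => hF.1.1
  have hcomp : IsCompact (Icc (0 : ℝ) 1 ∩ p ⁻¹' TSpline.skel T i) :=
    isCompact_Icc.inter_right (hclosed.preimage hp_cont)
  have hp0 : p 0 = x := by funext l; simp [p]
  have hp1 : p 1 = y := by funext l; simp [p]
  obtain ⟨s, ⟨hs01, hsS⟩, hsmax⟩ := hcomp.exists_isGreatest
    ⟨0, ⟨le_rfl, zero_le_one⟩, by rw [mem_preimage, hp0]; exact hxs⟩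
  have hs1 : s < 1 := lt_of_le_of_ne hs01.2 fun h => hys (by
    rw [h, mem_preimage, hp1] at hsS; exact hsS)
  have hpdom : ∀ t ∈ Icc (0 : ℝ) 1, ∀ l, p t l ∈ Icc (0 : ℝ) (N l) := fun t ht l => by
    have h1 := hdx l
    have h2 := hdy l
    have h3 := ht.1
    have h4 : 0 ≤ 1 - t := by linarith [ht.2]
    constructor
    · nlinarith [mul_nonneg h4 h1.1, mul_nonneg h3 h2.1]
    · nlinarith [mul_le_mul_of_nonneg_left h1.2 h4, mul_le_mul_of_nonneg_left h2.2 h3]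
  obtain ⟨z, hz⟩ : ∃ z, z = p s := ⟨_, rfl⟩
  have hzi : ∀ t, p t i = x i := fun t => by simp [p, hxyi]
  rw [mem_preimage, ← hz, TSpline.skel] at hsS
  simp only [mem_iUnion] at hsS
  obtain ⟨F, ⟨hF, hFi⟩, hzF⟩ := hsS
  rw [TSpline.closure_toSet] at hzF
  have hzF' : ∀ l, z l ∈ closure (F l) := fun l => hzF l trivial
  have hFi' : F i = {x i} := by
    obtain ⟨r, hr⟩ := hFi
    have h := hzF' i
    rw [hr, closure_singleton, mem_singleton_iff, hz, hzi] at h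
    rw [hr, h]
  -- A point `f` of the hyperface `F` close to `z`, with non-integer coordinates off `i`.
  have hf : ∀ l, ∃ g ∈ F l, (l = i → g = x i) ∧ (l ≠ i → TSpline.UnitNear (z l) g) := by
    intro l
    by_cases hl : l = i
    · subst hl
      exact ⟨x l, by rw [hFi']; rfl, fun _ => rfl, fun h => absurd rfl h⟩
    · obtain ⟨a, b, hab, _, h⟩ := TSpline.interval_of_hyperface T (by omega) hF hFi hl
      have hzl := hzF' l
      rw [h, TSpline.closure_Ioo_nat hab] at hzl
      obtain ⟨g, hg, hg'⟩ := TSpline.exists_unitNear hab hzl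
      exact ⟨g, h ▸ hg, fun h => absurd h hl, fun _ => hg'⟩
  choose f hfF hfi hfn using hf
  have hFdom : ∀ l, f l ∈ Icc (0 : ℝ) (N l) := by
    have : f ∈ TSpline.domain N := by
      rw [← T.union_eq]
      exact mem_biUnion hF.1 fun l _ => hfF l
    exact fun l => this l trivial
  -- A point `w = p (s + δ)` shortly after `z`.
  obtain ⟨δ, hδ0, hδ1, hδ⟩ : ∃ δ : ℝ, 0 < δ ∧ s + δ < 1 ∧
      ∀ l, y l - x l ≠ 0 → TSpline.UnitNear (z l) (z l + δ * (y l - x l)) := by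
    have h1 : ∀ᶠ δ in nhdsWithin (0 : ℝ) (Ioi 0), 0 < δ := self_mem_nhdsWithin
    have h2 : ∀ᶠ δ in nhdsWithin (0 : ℝ) (Ioi 0), δ < 1 - s :=
      nhdsWithin_le_nhds (gt_mem_nhds (by linarith))
    have h3 : ∀ᶠ δ in nhdsWithin (0 : ℝ) (Ioi 0), ∀ l, y l - x l ≠ 0 →
        TSpline.UnitNear (z l) (z l + δ * (y l - x l)) := by
      rw [Filter.eventually_all]
      intro l
      by_cases hl : y l - x l = 0
      · exact Filter.Eventually.of_forall fun _ h => absurd hl h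
      · filter_upwards [TSpline.eventually_unitNear (z l) hl] with δ h _ using h
    obtain ⟨δ, ha, hb, hc⟩ := (h1.and (h2.and h3)).exists
    exact ⟨δ, ha, by linarith, hc⟩
  have hsδ : s + δ ∈ Icc (0 : ℝ) 1 := ⟨by linarith [hs01.1], hδ1.le⟩
  obtain ⟨w, hw⟩ : ∃ w, w = p (s + δ) := ⟨_, rfl⟩
  have hwz : ∀ l, w l = z l + δ * (y l - x l) := fun l => by
    rw [hw, hz]; simp only [p]; ring
  have hwS : w ∉ TSpline.skel T i := fun h => by
    have := hsmax ⟨hsδ, show p (s + δ) ∈ TSpline.skel T i from hw ▸ h⟩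
    linarith
  have hwdom : ∀ l, w l ∈ Icc (0 : ℝ) (N l) := fun l => hw ▸ hpdom _ hsδ l
  have hwi : w i = x i := by rw [hw, hzi]
  -- The corners `g S` of a path from a perturbation of `w` to `f`: coordinates in `S` have been
  -- switched to those of `f`.
  let g : Finset (Fin d) → Fin d → ℝ := fun S l =>
    if l ∈ S ∨ y l - x l = 0 then f l else w l
  have hg_i : ∀ S, g S i = x i := fun S => by
    simp only [g]; split_ifs
    · exact hfi i rfl
    · exact hwi
  have hg_near : ∀ S l, l ≠ i → TSpline.UnitNear (z l) (g S l) := fun S l hl => by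
    simp only [g]; split_ifs with h
    · exact hfn l hl
    · push Not at h
      rw [hwz]; exact hδ l h.2
  have hg_dom : ∀ S l, g S l ∈ Icc (0 : ℝ) (N l) := fun S l => by
    simp only [g]; split_ifs
    · exact hFdom l
    · exact hwdom l
  have hempty : ¬ ∃ E ∈ T.entities, (∀ l, g ∅ l ∈ E l) ∧ ∃ r, E i = {r} := by
    rintro ⟨E, hE, hgE, hEi⟩
    have hint : ∀ l, l ≠ i → TSpline.IsIntervalComp (N l) (E l) := fun l hl =>
      T.interval_of_unitNear hE (hg_near ∅ l hl) (hgE l)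
    apply hwS
    refine mem_biUnion (show E ∈ _ from
      ⟨TSpline.hyperface_of_interval T (by omega) hE hEi hint, hEi⟩) ?_
    rw [TSpline.closure_toSet]
    intro l _
    show w l ∈ closure (E l)
    by_cases hl : l = i
    · subst hl; rw [hwi, ← hg_i ∅]; exact subset_closure (hgE l)
    by_cases hv : y l - x l = 0
    · obtain ⟨a, b, hab, _, h⟩ := hint l hl
      have hgl := hgE l
      rw [h] at hgl ⊢
      rw [hwz, hv, mul_zero, add_zero, TSpline.closure_Ioo_nat hab]
      exact (hg_near ∅ l hl).mem_Icc hgl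
    · have := hgE l
      simp only [g, Finset.notMem_empty, false_or, if_neg hv] at this
      exact subset_closure this
  have huniv : ∃ E ∈ T.entities, (∀ l, g Finset.univ l ∈ E l) ∧ ∃ r, E i = {r} :=
    ⟨F, hF.1, fun l => by simpa [g] using hfF l, hFi⟩
  obtain ⟨S, k, hkS, hS, hS'⟩ : ∃ (S : Finset (Fin d)) (k : Fin d), k ∉ S ∧
      (¬ ∃ E ∈ T.entities, (∀ l, g S l ∈ E l) ∧ ∃ r, E i = {r}) ∧
      ∃ E ∈ T.entities, (∀ l, g (insert k S) l ∈ E l) ∧ ∃ r, E i = {r} := by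
    by_contra! hcon
    refine absurd huniv (Finset.induction_on Finset.univ hempty ?_)
    rintro k S hk ih ⟨E, hE, hgE, r, hr⟩
    exact hcon S k hk (fun E hE hg r hr => ih ⟨E, hE, hg, r, hr⟩) E hE hgE r hr
  obtain ⟨P, hP, hgP, hPi⟩ := hS'
  obtain ⟨Q, hQ, hgQ⟩ := T.exists_entity (hg_dom S)
  have hQi := T.interval_of_not_singleton hQ fun h => hS ⟨Q, hQ, hgQ, h⟩
  have hgg : ∀ l, l ≠ k → g (insert k S) l = g S l := fun l hl => by
    simp [g, hl]
  -- The coordinate `k` really changes, so it differs from `i` and is moved along the segment.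
  have hne : g (insert k S) ≠ g S := fun h => hS ⟨P, hP, h ▸ hgP, hPi⟩
  have hik : k ≠ i := by
    rintro rfl
    apply hne
    funext l
    by_cases hl : l = k
    · subst hl; rw [hg_i, hg_i]
    · exact hgg l hl
  have hvk : y k - x k ≠ 0 := by
    intro hv
    apply hne
    funext l
    by_cases hl : l = k
    · subst hl; simp [g, hv]
    · exact hgg l hl
  obtain ⟨J, hJ, hJQ, hzJ, hJi⟩ := TSpline.exists_tjunction_of_cross hd T hik (z := z)
    (by rw [hg_i, hz, hzi]) (hg_near S) (hg_near (insert k S) k hik) hgg hQ hP hgQ hgP hQi hPi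
  refine ⟨J, Q, k, hJ, hJQ, ⟨z, hzJ, ?_⟩, fun h => hvk (by rw [h, sub_self]),
    ⟨w k, ?_, ?_⟩, by rw [hJi, hz, hzi]⟩
  · rw [segment_eq_image']
    exact ⟨s, hs01, by rw [hz]; funext l; simp [p]⟩
  · have := hgQ k
    simpa only [g, hkS, hvk, or_self, if_false] using this
  · rw [← segment_eq_uIcc, segment_eq_image']
    exact ⟨s + δ, hsδ, by rw [hw]; simp [p]⟩
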